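/- Every restricted Lorentz transformation μ is the product of two orthogonal reflections by two-dimensional spacelike planes: there exist spacelike planes A, B with μ = j_A j_B. -/

import Mathlib

noncomputable section

/-- Minkowski spacetime ℝ^{1+3}. -/
abbrev V4 : Type := Fin 4 → ℝ

/-- The Minkowski metric of signature (+,-,-,-). -/
def mg (x y : V4) : ℝ := x 0 * y 0 - x 1 * y 1 - x 2 * y 2 - x 3 * y 3

/-- The distinguished future-directed timelike unit vector. -/
def e0 : V4 := fun i => if i = 0 then 1 else 0

/-- A restricted Lorentz transformation: preserves the metric, has determinant 1,
and preserves the time orientation. -/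
def IsRestrictedLorentz (T : V4 →ₗ[ℝ] V4) : Prop :=
  (∀ x y, mg (T x) (T y) = mg x y) ∧ LinearMap.det T = 1 ∧ 0 < (T e0) 0

/-- A two-dimensional spacelike linear subspace. -/
def IsSpacelikePlane (S : Submodule ℝ V4) : Prop :=
  Module.finrank ℝ S = 2 ∧ ∀ x ∈ S, x ≠ 0 → mg x x < 0

/-- `j` is the orthogonal reflection by the spacelike plane `S`. -/
def IsReflectionBy (S : Submodule ℝ V4) (j : V4 →ₗ[ℝ] V4) : Prop :=
  (∀ x ∈ S, j x = x) ∧ ∀ x, (∀ s ∈ S, mg x s = 0) → j x = -x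

/-!
If an isometry `T` fixes a timelike vector, its fixed space `F` is nondegenerate. On `Fᗮ` the map
`T - 1` is invertible, and up to sign its adjoint composed with `T` is `T - 1` itself, so
`det T = (-1) ^ dim Fᗮ`: the determinant decides the parity of `dim F`.

Write `σ v` for the reflection in the hyperplane orthogonal to `v`. For `μ` restricted Lorentz,
`u = μ e0 + e0` is timelike and `σ u` sends `μ e0` to `-e0`, so `ρ = σ e0 ∘ σ u ∘ μ` has determinant
`1` and fixes `e0`; by parity it fixes a plane through `e0`. Choose `b ≠ 0` orthogonal to this plane
and also to `u`. Then `σ b ∘ ρ` has determinant `-1` and still fixes the plane, so its fixed space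
has dimension `3` and it is a single reflection `σ y` with `y` orthogonal to `e0`. Since `σ e0` and
`σ b` commute, `μ = (σ u ∘ σ b) ∘ (σ e0 ∘ σ y)`, and each factor, a product of reflections in two
orthogonal vectors the first of which is timelike, is the reflection by the spacelike plane
orthogonal to both.
-/

section BilinearSpace

variable {K V : Type*} [Field K] [AddCommGroup V] [Module K V] {B : LinearMap.BilinForm K V}

/-- The reflection in the hyperplane orthogonal to `v`, sending `v` to `-v`. If `v` is isotropic,
division by zero makes it the identity. -/
def hyperplaneReflection (B : LinearMap.BilinForm K V) (v : V) : V →ₗ[K] V :=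
  Module.preReflection v ((2 / B v v) • B v)

namespace hyperplaneReflection

variable {v w x y : V}

lemma apply (B : LinearMap.BilinForm K V) (v x : V) :
    hyperplaneReflection B v x = x - (2 / B v v * B v x) • v := by
  simp [hyperplaneReflection, Module.preReflection_apply]

lemma apply_self (hv : B v v ≠ 0) : hyperplaneReflection B v v = -v :=
  Module.preReflection_apply_self (div_mul_cancel₀ 2 hv)

lemma apply_of_ortho (h : B v x = 0) : hyperplaneReflection B v x = x := by
  simp [apply, h]

lemma eq_comp_of_comp_eq {S T : V →ₗ[K] V} (hv : B v v ≠ 0)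
    (h : hyperplaneReflection B v ∘ₗ T = S) : T = hyperplaneReflection B v ∘ₗ S := by
  rw [← h]
  ext x
  exact (Module.involutive_preReflection (div_mul_cancel₀ 2 hv) (T x)).symm

lemma isOrthogonal_comp {T : V →ₗ[K] V} (hB : B.IsSymm) (hv : B v v ≠ 0)
    (hT : B.IsOrthogonal T) : B.IsOrthogonal (hyperplaneReflection B v ∘ₗ T) := by
  suffices B.IsOrthogonal (hyperplaneReflection B v) from
    fun x y ↦ (this (T x) (T y)).trans (hT x y)
  intro x y
  simp only [apply, map_sub, map_smul, LinearMap.sub_apply, LinearMap.smul_apply, smul_eq_mul,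
    hB.eq x v]
  field_simp
  ring

lemma det [FiniteDimensional K V] (hv : B v v ≠ 0) :
    LinearMap.det (hyperplaneReflection B v) = -1 := by
  have transvection_eq : hyperplaneReflection B v =
      LinearMap.transvection (-(2 / B v v) • B v) v := by
    ext x
    simp [apply, LinearMap.transvection.apply, sub_eq_add_neg]
  rw [transvection_eq, LinearMap.transvection.det, LinearMap.smul_apply, smul_eq_mul, neg_mul,
    div_mul_cancel₀ _ hv]
  norm_num

lemma comp_comm_of_ortho (hB : B.IsSymm) (h : B v w = 0) :
    hyperplaneReflection B v ∘ₗ hyperplaneReflection B w =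
      hyperplaneReflection B w ∘ₗ hyperplaneReflection B v := by
  have h' : B w v = 0 := by rw [hB.eq, h]
  ext x
  simp only [LinearMap.comp_apply, apply B w x, apply B v x, map_sub, map_smul, apply_of_ortho h,
    apply_of_ortho h']
  abel

lemma sub_apply_left (hB : B.IsSymm) (hxy : B x x = B y y) (h : B (x - y) (x - y) ≠ 0) :
    hyperplaneReflection B (x - y) x = y := by
  have norm_eq : B (x - y) (x - y) = 2 * B (x - y) x := by
    simp only [map_sub, LinearMap.sub_apply, ← hxy, hB.eq y x]
    ring
  rw [apply, div_mul_eq_mul_div, ← norm_eq, div_self h, one_smul, sub_sub_cancel]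

lemma comp_apply_of_mem_orthogonal_span_pair (hx : x ∈ B.orthogonal (Submodule.span K {v, w})) :
    (hyperplaneReflection B v ∘ₗ hyperplaneReflection B w) x = x := by
  have hvx : B v x = 0 := hx v (Submodule.mem_span_of_mem (by simp))
  have hwx : B w x = 0 := hx w (Submodule.mem_span_of_mem (by simp))
  rw [LinearMap.comp_apply, apply_of_ortho hwx, apply_of_ortho hvx]

lemma comp_apply_of_mem_span_pair (hB : B.IsSymm) (hv : B v v ≠ 0) (hw : B w w ≠ 0)
    (hvw : B v w = 0) (hx : x ∈ Submodule.span K {v, w}) :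
    (hyperplaneReflection B v ∘ₗ hyperplaneReflection B w) x = -x := by
  have hwv : B w v = 0 := by rw [hB.eq, hvw]
  obtain ⟨a, b, rfl⟩ := Submodule.mem_span_pair.mp hx
  simp only [LinearMap.comp_apply, map_add, map_smul, map_neg, apply_of_ortho hwv, apply_self hv,
    apply_self hw, apply_of_ortho hvw]
  module

end hyperplaneReflection

lemma linearIndependent_pair_of_ortho {v w : V} (hB : B.IsSymm) (hv : B v v ≠ 0)
    (hw : B w w ≠ 0) (hvw : B v w = 0) : LinearIndependent K ![v, w] := by
  have hwv : B w v = 0 := by rw [hB.eq, hvw]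
  refine LinearMap.linearIndependent_of_isOrthoᵢ (B := B) ?_ ?_
  · exact LinearMap.isOrthoᵢ_def.mpr (by simp [Fin.forall_fin_two, hvw, hwv])
  · simpa [Fin.forall_fin_two] using And.intro hv hw

variable {T : V →ₗ[K] V}

lemma apply_sub_self_mem_orthogonal_fixedSubmodule (hT : B.IsOrthogonal T) (x : V) :
    T x - x ∈ B.orthogonal T.fixedSubmodule := by
  intro f hf
  calc B f (T x - x) = B (T f) (T x) - B f x := by
        rw [map_sub, LinearMap.mem_fixedSubmodule_iff.mp hf]
    _ = 0 := sub_eq_zero.mpr (hT f x)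

lemma fixedSubmodule_lt_fixedSubmodule_reflection_comp (hB : B.IsSymm) (hT : B.IsOrthogonal T)
    {x : V} (hx : B (T x - x) (T x - x) ≠ 0) :
    T.fixedSubmodule < (hyperplaneReflection B (T x - x) ∘ₗ T).fixedSubmodule := by
  refine SetLike.lt_iff_le_and_exists.mpr ⟨fun f hf ↦ ?_, x, ?_, fun hxT ↦ ?_⟩
  · have ortho : B (T x - x) f = 0 := by
      rw [hB.eq]
      exact apply_sub_self_mem_orthogonal_fixedSubmodule hT x f hf
    rw [LinearMap.mem_fixedSubmodule_iff] at hf ⊢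
    rw [LinearMap.comp_apply, hf, hyperplaneReflection.apply_of_ortho ortho]
  · exact LinearMap.mem_fixedSubmodule_iff.mpr
      (hyperplaneReflection.sub_apply_left hB (hT x x) hx)
  · rw [LinearMap.mem_fixedSubmodule_iff.mp hxT] at hx
    simp at hx

variable [FiniteDimensional K V]

lemma det_eq_neg_one_pow_finrank_of_fixedSubmodule_eq_bot (hB : B.Nondegenerate)
    (hT : B.IsOrthogonal T) (hfix : T.fixedSubmodule = ⊥) :
    LinearMap.det T = (-1) ^ Module.finrank K V := by
  set D := B.toDual hB
  set N := T - LinearMap.id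
  -- `B(Tx, (T - 1)y) = -B((T - 1)x, y)`: up to sign, `(T - 1)ᵗ` composed with `T` is `T - 1`.
  have adjoint_eq : (D.symm.toLinearMap ∘ₗ N.dualMap ∘ₗ D.toLinearMap) ∘ₗ T = -N := by
    refine LinearMap.ext fun x ↦ D.injective (LinearMap.ext fun y ↦ ?_)
    have hxy := hT x y
    simp only [LinearMap.comp_apply, LinearEquiv.coe_coe, LinearEquiv.apply_symm_apply,
      LinearMap.dualMap_apply, LinearMap.neg_apply, map_neg, D, LinearMap.BilinForm.toDual_def, N,
      LinearMap.sub_apply, LinearMap.id_apply, map_sub, hxy]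
    ring
  have det_N_ne_zero : LinearMap.det N ≠ 0 := by
    rwa [LinearMap.fixedSubmodule_eq_ker, ← LinearMap.isUnit_iff_ker_eq_bot,
      LinearMap.isUnit_iff_isUnit_det, isUnit_iff_ne_zero] at hfix
  have det_conj_dualMap :
      LinearMap.det (D.symm.toLinearMap ∘ₗ N.dualMap ∘ₗ D.toLinearMap) = LinearMap.det N :=
    (LinearMap.det_conj N.dualMap D.symm).trans N.det_dualMap
  have det_eq := congrArg LinearMap.det adjoint_eq
  rw [LinearMap.det_comp, det_conj_dualMap, ← neg_one_smul K N, LinearMap.det_smul,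
    mul_comm] at det_eq
  exact mul_right_cancel₀ det_N_ne_zero det_eq

lemma det_eq_neg_one_pow_finrank_orthogonal_fixedSubmodule (hB : B.Nondegenerate)
    (hrefl : B.IsRefl) (hT : B.IsOrthogonal T)
    (hdisj : Disjoint T.fixedSubmodule (B.orthogonal T.fixedSubmodule)) :
    LinearMap.det T = (-1) ^ Module.finrank K (B.orthogonal T.fixedSubmodule) := by
  set W := B.orthogonal T.fixedSubmodule
  have sub_mem : ∀ x, T x - x ∈ W := apply_sub_self_mem_orthogonal_fixedSubmodule hT
  have W_le : W ≤ W.comap T := fun x hx ↦ (W.sub_mem_iff_left hx).mp (sub_mem x)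
  have mapQ_eq_id : W.mapQ W T W_le = LinearMap.id :=
    Submodule.linearMap_qext W (LinearMap.ext fun x ↦ (Submodule.Quotient.eq W).mpr (sub_mem x))
  have restrict_nondegenerate : (B.restrict W).Nondegenerate :=
    B.nondegenerate_restrict_of_disjoint_orthogonal hrefl (by
      rw [LinearMap.BilinForm.orthogonal_orthogonal hB hrefl]
      exact hdisj.symm)
  have restrict_fixed : (T.restrict W_le).fixedSubmodule = ⊥ := by
    refine (Submodule.eq_bot_iff _).mpr fun x hx ↦ Subtype.ext ?_
    have fixed : T x = x := congrArg Subtype.val (LinearMap.mem_fixedSubmodule_iff.mp hx)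
    exact Submodule.disjoint_def.mp hdisj x (LinearMap.mem_fixedSubmodule_iff.mpr fixed) x.2
  rw [T.det_eq_det_mul_det W W_le, mapQ_eq_id, LinearMap.det_id, mul_one]
  exact det_eq_neg_one_pow_finrank_of_fixedSubmodule_eq_bot restrict_nondegenerate
    (fun x y ↦ hT x y) restrict_fixed

end BilinearSpace

section Minkowski

/-- The Minkowski metric `mg` bundled as a bilinear form. -/
def minkowskiForm : LinearMap.BilinForm ℝ V4 :=
  LinearMap.mk₂ ℝ mg
    (fun _ _ _ ↦ by simp only [mg, Pi.add_apply]; ring)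
    (fun _ _ _ ↦ by simp only [mg, Pi.smul_apply, smul_eq_mul]; ring)
    (fun _ _ _ ↦ by simp only [mg, Pi.add_apply]; ring)
    (fun _ _ _ ↦ by simp only [mg, Pi.smul_apply, smul_eq_mul]; ring)

lemma minkowskiForm_apply (x y : V4) : minkowskiForm x y = mg x y := rfl

lemma minkowskiForm_isSymm : minkowskiForm.IsSymm :=
  ⟨fun x y ↦ by simp only [minkowskiForm_apply, mg]; ring⟩

lemma minkowskiForm_nondegenerate : minkowskiForm.Nondegenerate := by
  refine minkowskiForm_isSymm.isRefl.nondegenerate_iff_separatingLeft.mpr fun x hx ↦ ?_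
  ext i
  have hxi := hx (Pi.single i 1)
  fin_cases i <;> simpa [minkowskiForm_apply, mg] using hxi

local notation "σ" => hyperplaneReflection minkowskiForm

variable {e p q x : V4} {T : V4 →ₗ[ℝ] V4}

lemma ne_zero_of_timelike (he : 0 < mg e e) : e ≠ 0 := by
  rintro rfl
  simp [mg] at he

lemma mg_self_neg_of_ortho_timelike (hp : 0 < mg p p) (hpx : mg p x = 0) (hx : x ≠ 0) :
    mg x x < 0 := by
  have cauchy_schwarz : (p 1 * x 1 + p 2 * x 2 + p 3 * x 3) ^ 2 ≤
      (p 1 ^ 2 + p 2 ^ 2 + p 3 ^ 2) * (x 1 ^ 2 + x 2 ^ 2 + x 3 ^ 2) := by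
    simpa [Fin.sum_univ_three] using
      Finset.sum_mul_sq_le_sq_mul_sq Finset.univ ![p 1, p 2, p 3] ![x 1, x 2, x 3]
  have mg_self_le : p 0 ^ 2 * mg x x ≤ -mg p p * (x 1 ^ 2 + x 2 ^ 2 + x 3 ^ 2) := by
    have time_eq : p 0 * x 0 = p 1 * x 1 + p 2 * x 2 + p 3 * x 3 := by
      simp only [mg] at hpx
      linarith
    rw [← time_eq] at cauchy_schwarz
    simp only [mg]
    linarith
  have p_zero_sq_pos : 0 < p 0 ^ 2 := by
    simp only [mg] at hp
    nlinarith [sq_nonneg (p 1), sq_nonneg (p 2), sq_nonneg (p 3)]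
  by_contra! hxx
  have space_eq_zero : x 1 ^ 2 + x 2 ^ 2 + x 3 ^ 2 = 0 := by
    nlinarith [mul_nonneg p_zero_sq_pos.le hxx, sq_nonneg (x 1), sq_nonneg (x 2), sq_nonneg (x 3)]
  have time_sq_le : x 0 ^ 2 ≤ 0 := by
    have mg_nonpos : mg x x ≤ 0 := by
      rw [space_eq_zero, mul_zero] at mg_self_le
      exact nonpos_of_mul_nonpos_right mg_self_le p_zero_sq_pos
    simp only [mg] at mg_nonpos
    linarith
  have sq_nonpos (i : Fin 4) : x i ^ 2 ≤ 0 := by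
    fin_cases i <;> simp only [Fin.reduceFinMk] <;>
      linarith [sq_nonneg (x 1), sq_nonneg (x 2), sq_nonneg (x 3)]
  exact hx (funext fun i ↦ pow_eq_zero_iff two_ne_zero |>.mp ((sq_nonpos i).antisymm (sq_nonneg _)))

lemma det_eq_neg_one_pow_finrank_fixedSubmodule (hT : minkowskiForm.IsOrthogonal T)
    (he : 0 < mg e e) (hTe : T e = e) :
    LinearMap.det T = (-1) ^ Module.finrank ℝ T.fixedSubmodule := by
  have disjoint : Disjoint T.fixedSubmodule (minkowskiForm.orthogonal T.fixedSubmodule) := by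
    refine Submodule.disjoint_def.mpr fun x hx hx_ortho ↦ ?_
    by_contra hx0
    have hex : mg e x = 0 := hx_ortho e (LinearMap.mem_fixedSubmodule_iff.mpr hTe)
    exact (mg_self_neg_of_ortho_timelike he hex hx0).ne (hx_ortho x hx)
  have finrank_le : Module.finrank ℝ T.fixedSubmodule ≤ 4 := by
    simpa using T.fixedSubmodule.finrank_le
  rw [det_eq_neg_one_pow_finrank_orthogonal_fixedSubmodule minkowskiForm_nondegenerate
    minkowskiForm_isSymm.isRefl hT disjoint,
    LinearMap.BilinForm.finrank_orthogonal minkowskiForm_nondegenerate, Module.finrank_fin_fun]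
  exact neg_one_pow_congr (by grind)

lemma exists_eq_reflection_of_det_eq_neg_one (hT : minkowskiForm.IsOrthogonal T)
    (hdet : LinearMap.det T = -1) (he : 0 < mg e e) (hTe : T e = e)
    (hfix : 1 < Module.finrank ℝ T.fixedSubmodule) :
    ∃ y, y ≠ 0 ∧ mg e y = 0 ∧ T = σ y := by
  obtain ⟨x, hx⟩ : ∃ x, T x ≠ x := by
    by_contra! h
    have T_eq_id : T = LinearMap.id := LinearMap.ext h
    norm_num [T_eq_id] at hdet
  set y := T x - x
  have hy0 : y ≠ 0 := sub_ne_zero.mpr hx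
  have hey : mg e y = 0 := apply_sub_self_mem_orthogonal_fixedSubmodule hT x e
    (LinearMap.mem_fixedSubmodule_iff.mpr hTe)
  have hyy : minkowskiForm y y ≠ 0 := (mg_self_neg_of_ortho_timelike he hey hy0).ne
  have lt := Submodule.finrank_lt_finrank_of_lt
    (fixedSubmodule_lt_fixedSubmodule_reflection_comp minkowskiForm_isSymm hT hyy)
  set S := σ y ∘ₗ T
  have hS : minkowskiForm.IsOrthogonal S :=
    hyperplaneReflection.isOrthogonal_comp minkowskiForm_isSymm hyy hT
  have hSe : S e = e := by
    rw [LinearMap.comp_apply, hTe, hyperplaneReflection.apply_of_ortho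
      ((minkowskiForm_isSymm.eq y e).trans hey)]
  have even : Even (Module.finrank ℝ S.fixedSubmodule) := by
    rw [← neg_one_pow_eq_one_iff_even (R := ℝ) (by norm_num),
      ← det_eq_neg_one_pow_finrank_fixedSubmodule hS he hSe, LinearMap.det_comp,
      hyperplaneReflection.det hyy, hdet]
    norm_num
  have S_eq_id : S = LinearMap.id := by
    have finrank_le : Module.finrank ℝ S.fixedSubmodule ≤ 4 := by
      simpa using S.fixedSubmodule.finrank_le
    refine LinearMap.fixedSubmodule_eq_top_iff.mp (Submodule.eq_top_of_finrank_eq ?_)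
    rw [Module.finrank_fin_fun]
    grind
  exact ⟨y, hy0, hey, hyperplaneReflection.eq_comp_of_comp_eq hyy S_eq_id⟩

lemma exists_ne_zero_ortho_three (x y z : V4) :
    ∃ b, b ≠ 0 ∧ mg x b = 0 ∧ mg y b = 0 ∧ mg z b = 0 := by
  let W := Submodule.span ℝ (Set.range ![x, y, z])
  have finrank_W : Module.finrank ℝ W ≤ 3 :=
    finrank_range_le_card (R := ℝ) ![x, y, z]
  have orthogonal_ne_bot : minkowskiForm.orthogonal W ≠ ⊥ := by
    rw [← Submodule.one_le_finrank_iff,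
      LinearMap.BilinForm.finrank_orthogonal minkowskiForm_nondegenerate, Module.finrank_fin_fun]
    omega
  obtain ⟨b, hb, hb0⟩ := Submodule.exists_mem_ne_zero_of_ne_bot orthogonal_ne_bot
  have ortho (i : Fin 3) : mg (![x, y, z] i) b = 0 :=
    hb _ (Submodule.subset_span (Set.mem_range_self i))
  exact ⟨b, hb0, ortho 0, ortho 1, ortho 2⟩

lemma exists_fixed_notMem_span (hT : minkowskiForm.IsOrthogonal T)
    (hdet : LinearMap.det T = 1) (he : 0 < mg e e) (hTe : T e = e) :
    ∃ n, T n = n ∧ n ∉ Submodule.span ℝ {e} := by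
  have span_le : Submodule.span ℝ {e} ≤ T.fixedSubmodule :=
    (Submodule.span_singleton_le_iff_mem _ _).mpr (LinearMap.mem_fixedSubmodule_iff.mpr hTe)
  have span_ne : Submodule.span ℝ {e} ≠ T.fixedSubmodule := by
    intro h
    have det_eq := det_eq_neg_one_pow_finrank_fixedSubmodule hT he hTe
    rw [← h, finrank_span_singleton (ne_zero_of_timelike he), hdet] at det_eq
    norm_num at det_eq
  obtain ⟨n, hn, hne⟩ := SetLike.exists_of_lt (span_le.lt_of_ne span_ne)
  exact ⟨n, LinearMap.mem_fixedSubmodule_iff.mp hn, hne⟩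

lemma exists_eq_reflection_comp_reflection (hT : minkowskiForm.IsOrthogonal T)
    (hdet : LinearMap.det T = 1) (he : 0 < mg e e) (hTe : T e = e) (u : V4) :
    ∃ b y, b ≠ 0 ∧ mg e b = 0 ∧ mg u b = 0 ∧ y ≠ 0 ∧ mg e y = 0 ∧ T = σ b ∘ₗ σ y := by
  obtain ⟨n, hTn, hn⟩ := exists_fixed_notMem_span hT hdet he hTe
  obtain ⟨b, hb0, heb, hnb, hub⟩ := exists_ne_zero_ortho_three e n u
  have hbb : minkowskiForm b b ≠ 0 := (mg_self_neg_of_ortho_timelike he heb hb0).ne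
  set S := σ b ∘ₗ T
  have hS : minkowskiForm.IsOrthogonal S :=
    hyperplaneReflection.isOrthogonal_comp minkowskiForm_isSymm hbb hT
  have S_det : LinearMap.det S = -1 := by
    rw [LinearMap.det_comp, hyperplaneReflection.det hbb, hdet, mul_one]
  have S_fixes {v : V4} (hTv : T v = v) (hvb : mg v b = 0) : S v = v := by
    rw [LinearMap.comp_apply, hTv, hyperplaneReflection.apply_of_ortho
      ((minkowskiForm_isSymm.eq b v).trans hvb)]
  have span_lt : Submodule.span ℝ {e} < S.fixedSubmodule := by
    refine SetLike.lt_iff_le_and_exists.mpr ⟨?_, n, ?_, hn⟩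
    · rw [Submodule.span_singleton_le_iff_mem, LinearMap.mem_fixedSubmodule_iff]
      exact S_fixes hTe heb
    · exact LinearMap.mem_fixedSubmodule_iff.mpr (S_fixes hTn hnb)
  have finrank_lt := Submodule.finrank_lt_finrank_of_lt span_lt
  rw [finrank_span_singleton (ne_zero_of_timelike he)] at finrank_lt
  obtain ⟨y, hy0, hey, S_eq⟩ :=
    exists_eq_reflection_of_det_eq_neg_one hS S_det he (S_fixes hTe heb) finrank_lt
  exact ⟨b, y, hb0, heb, hub, hy0, hey, hyperplaneReflection.eq_comp_of_comp_eq hbb S_eq⟩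

lemma isSpacelikePlane_orthogonal_span_pair (hp : 0 < mg p p) (hpq : mg p q = 0) (hq : q ≠ 0) :
    IsSpacelikePlane (minkowskiForm.orthogonal (Submodule.span ℝ {p, q})) := by
  have hqq : mg q q < 0 := mg_self_neg_of_ortho_timelike hp hpq hq
  have finrank_span : Module.finrank ℝ (Submodule.span ℝ {p, q}) = 2 := by
    rw [← Matrix.range_cons_cons_empty p q ![]]
    exact finrank_span_eq_card
      (linearIndependent_pair_of_ortho minkowskiForm_isSymm hp.ne' hqq.ne hpq)
  refine ⟨?_, fun x hx hx0 ↦ ?_⟩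
  · rw [LinearMap.BilinForm.finrank_orthogonal minkowskiForm_nondegenerate, finrank_span,
      Module.finrank_fin_fun]
  · exact mg_self_neg_of_ortho_timelike hp (hx p (Submodule.mem_span_of_mem (by simp))) hx0

lemma isReflectionBy_orthogonal_span_pair (hp : 0 < mg p p) (hpq : mg p q = 0) (hq : q ≠ 0) :
    IsReflectionBy (minkowskiForm.orthogonal (Submodule.span ℝ {p, q})) (σ p ∘ₗ σ q) := by
  have hqq : mg q q < 0 := mg_self_neg_of_ortho_timelike hp hpq hq
  refine ⟨fun x hx ↦ hyperplaneReflection.comp_apply_of_mem_orthogonal_span_pair hx,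
    fun x hx ↦ hyperplaneReflection.comp_apply_of_mem_span_pair minkowskiForm_isSymm hp.ne'
      hqq.ne hpq ?_⟩
  rw [← LinearMap.BilinForm.orthogonal_orthogonal minkowskiForm_nondegenerate
    minkowskiForm_isSymm.isRefl (Submodule.span ℝ {p, q})]
  exact fun s hs ↦ (minkowskiForm_isSymm.eq s x).trans (hx s hs)

lemma mg_e0_self : mg e0 e0 = 1 := by
  simp [mg, e0]

lemma mg_sub_neg_e0_self_pos (hx : mg x x = 1) (hx0 : 0 < x 0) :
    0 < mg (x - -e0) (x - -e0) := by
  have expand : mg (x - -e0) (x - -e0) = mg x x + 2 * x 0 + 1 := by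
    have time : (x - -e0) 0 = x 0 + 1 := by simp [e0]
    have space : ∀ i ≠ 0, (x - -e0) i = x i := fun i hi ↦ by simp [e0, hi]
    simp only [mg, time, space 1 (by decide), space 2 (by decide), space 3 (by decide)]
    ring
  linarith

lemma exists_eq_comp_four_reflections {μ : V4 →ₗ[ℝ] V4} (hμ : IsRestrictedLorentz μ) :
    ∃ u b y, 0 < mg u u ∧ b ≠ 0 ∧ mg u b = 0 ∧ y ≠ 0 ∧ mg e0 y = 0 ∧
      μ = (σ u ∘ₗ σ b) ∘ₗ (σ e0 ∘ₗ σ y) := by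
  obtain ⟨hiso, hdet, hpos⟩ := hμ
  have he : 0 < mg e0 e0 := by norm_num [mg_e0_self]
  have hμe : mg (μ e0) (μ e0) = mg e0 e0 := hiso e0 e0
  set u := μ e0 - -e0
  have hu : 0 < mg u u := mg_sub_neg_e0_self_pos (hμe.trans mg_e0_self) hpos
  have he' : minkowskiForm e0 e0 ≠ 0 := he.ne'
  have hu' : minkowskiForm u u ≠ 0 := hu.ne'
  set ρ := σ e0 ∘ₗ σ u ∘ₗ μ
  have hρ : minkowskiForm.IsOrthogonal ρ :=
    hyperplaneReflection.isOrthogonal_comp minkowskiForm_isSymm he'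
      (hyperplaneReflection.isOrthogonal_comp minkowskiForm_isSymm hu' hiso)
  have ρ_det : LinearMap.det ρ = 1 := by
    norm_num [ρ, LinearMap.det_comp, hyperplaneReflection.det he', hyperplaneReflection.det hu',
      hdet]
  have ρ_e0 : ρ e0 = e0 := by
    have reflect_u : σ u (μ e0) = -e0 :=
      hyperplaneReflection.sub_apply_left minkowskiForm_isSymm
        (by simpa only [map_neg, LinearMap.neg_apply, neg_neg, minkowskiForm_apply] using hμe) hu'
    simp only [ρ, LinearMap.comp_apply, reflect_u, map_neg, hyperplaneReflection.apply_self he',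
      neg_neg]
  obtain ⟨b, y, hb0, heb, hub, hy0, hey, ρ_eq⟩ :=
    exists_eq_reflection_comp_reflection hρ ρ_det he ρ_e0 u
  refine ⟨u, b, y, hu, hb0, hub, hy0, hey, ?_⟩
  calc μ = σ u ∘ₗ (σ e0 ∘ₗ σ b) ∘ₗ σ y := hyperplaneReflection.eq_comp_of_comp_eq hu'
        (hyperplaneReflection.eq_comp_of_comp_eq he' ρ_eq)
    _ = (σ u ∘ₗ σ b) ∘ₗ (σ e0 ∘ₗ σ y) := by
        rw [hyperplaneReflection.comp_comm_of_ortho minkowskiForm_isSymm heb]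
        rfl

end Minkowski

/-- Every restricted Lorentz transformation is a product of two orthogonal
reflections by two-dimensional spacelike planes. -/
theorem restricted_lorentz_is_product_of_two_reflections
    (μ : V4 →ₗ[ℝ] V4) (hμ : IsRestrictedLorentz μ) :
    ∃ (A B : Submodule ℝ V4) (jA jB : V4 →ₗ[ℝ] V4),
      IsSpacelikePlane A ∧ IsSpacelikePlane B ∧
      IsReflectionBy A jA ∧ IsReflectionBy B jB ∧ μ = jA ∘ₗ jB := by
  obtain ⟨u, b, y, hu, hb0, hub, hy0, hey, μ_eq⟩ := exists_eq_comp_four_reflections hμ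
  have he : 0 < mg e0 e0 := by norm_num [mg_e0_self]
  exact ⟨_, _, _, _, isSpacelikePlane_orthogonal_span_pair hu hub hb0,
    isSpacelikePlane_orthogonal_span_pair he hey hy0,
    isReflectionBy_orthogonal_span_pair hu hub hb0,
    isReflectionBy_orthogonal_span_pair he hey hy0, μ_eq⟩
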